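/- arXiv:0809.0275 — 4 statements merged into one kernel-verified Lean document; each statement's English description precedes it below -/
import Mathlib

section
/- Fix ε ∈ (0,1) and let k = k(n) be any sequence of integers with k(n) → ∞ and 2 ≤ k(n) ≤ 12 log n for all n. Let N_{k,ε}(n) be the number of sequences (v_1,…,v_{k+1}) of k+1 pairwise distinct vertices of K_n with Σ_{m=1}^{k} X_{v_m v_{m+1}} ≤ (1−ε) log n. Then E[ N_{k(n),ε}(n) ] / [ (n/√(2π k(n))) · ( e (1−ε) log n / k(n) )^{k(n)} ] → 1 as n → ∞. -/
/-!
There are `n (n - 1) ⋯ (n - k)` injective sequences of `k + 1` vertices, and each runs through `k`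
distinct edges, whose weights are independent exponentials of rate `1 / n`. Hence, with
`L = (1 - ε) log n`, the expectation is exactly this falling factorial times the probability
`erlangCdf (1 / n) k L` that `k` such variables sum to at most `L` (`integral_numLightSeq`).

Since the joint density lies between `n ^ (-k) exp (-L / n)` and `n ^ (-k)` on the simplex of volume
`L ^ k / k!`, this probability is between `exp (-L / n) (L / n) ^ k / k!` and `(L / n) ^ k / k!`
(`le_erlangCdf`, `erlangCdf_le`, proved by induction on `k` by conditioning on the first variable).
As `L / n → 0`, it is asymptotic to `(L / n) ^ k / k!`. As `k = O(log n)` gives `k ^ 2 / n → 0`, the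
falling factorial is asymptotic to `n ^ (k + 1)` (`le_descFactorial_div_pow`). Stirling's formula
for `k!`, available because `k → ∞`, turns the product `n L ^ k / k!` into the stated form.
-/

open MeasureTheory ProbabilityTheory Real Filter

/-- The complete graph on `n` vertices. -/
def Kn (n : ℕ) : SimpleGraph (Fin n) := ⊤

/-- The canonical probability space for i.i.d. `Exp(mean n)` edge weights on `K_n`:
weights are indexed by `Sym2 (Fin n)` and each coordinate has the exponential
distribution with rate `1/n` (mean `n`). -/
noncomputable def edgeSpace (n : ℕ) : Measure (Sym2 (Fin n) → ℝ) :=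
  haveI : ∀ _e : Sym2 (Fin n), SigmaFinite (expMeasure (1 / (n : ℝ))) := fun _e =>
    SigmaFinite.withDensity_of_ne_top' (fun _x => ENNReal.ofReal_ne_top)
  Measure.pi (fun _e : Sym2 (Fin n) => expMeasure (1 / (n : ℝ)))

/-- The weight of a walk: the sum of the weights of its edges. -/
noncomputable def walkWeight {n : ℕ} (w : Sym2 (Fin n) → ℝ) {i j : Fin n}
    (p : (Kn n).Walk i j) : ℝ := (p.edges.map w).sum

/-- `p` is a minimum-weight path from `i` to `j`. -/
def IsMinPath {n : ℕ} (w : Sym2 (Fin n) → ℝ) {i j : Fin n} (p : (Kn n).Walk i j) : Prop :=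
  p.IsPath ∧ ∀ q : (Kn n).Walk i j, q.IsPath → walkWeight w p ≤ walkWeight w q

/-- `max_{1 ≤ i,j ≤ n} |P_{ij}|` : the largest number of edges of any
minimum-weight path between a pair of vertices. -/
noncomputable def maxMinLen {n : ℕ} (w : Sym2 (Fin n) → ℝ) : ℕ :=
  sSup {L : ℕ | ∃ (i j : Fin n) (p : (Kn n).Walk i j), IsMinPath w p ∧ p.length = L}


/-- `N_{k,ε}(n)`: the number of sequences `(v_1,…,v_{k+1})` of pairwise distinct vertices
of `K_n` whose successive edges have total weight at most `(1−ε) log n`. -/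
noncomputable def numLightSeq (n k : ℕ) (ε : ℝ) (w : Sym2 (Fin n) → ℝ) : ℕ :=
  Nat.card {v : Fin (k + 1) → Fin n // Function.Injective v ∧
    ∑ m : Fin k, w s(v m.castSucc, v m.succ) ≤ (1 - ε) * Real.log n}

/-- The probability that `k` independent exponential variables of rate `r` have sum at most `t`
(the Erlang distribution function). -/
noncomputable def erlangCdf (r : ℝ) (k : ℕ) (t : ℝ) : ENNReal :=
  Measure.pi (fun _ : Fin k => expMeasure r) {x | ∑ i, x i ≤ t}

lemma measurableSet_sum_le {ι κ : Type*} [Fintype ι] (e : ι → κ) (t : ℝ) :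
    MeasurableSet {w : κ → ℝ | ∑ i, w (e i) ≤ t} :=
  measurableSet_le (by fun_prop) measurable_const

lemma erlangCdf_zero_of_nonneg (r : ℝ) {t : ℝ} (ht : 0 ≤ t) : erlangCdf r 0 t = 1 := by
  simp [erlangCdf, ht]

lemma erlangCdf_zero_of_neg (r : ℝ) {t : ℝ} (ht : t < 0) : erlangCdf r 0 t = 0 := by
  simp [erlangCdf, not_le.mpr ht]

/-- Conditioning on the first variable. -/
lemma erlangCdf_succ {r : ℝ} (hr : 0 < r) (k : ℕ) (t : ℝ) :
    erlangCdf r (k + 1) t = ∫⁻ s, exponentialPDF r s * erlangCdf r k (t - s) := by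
  have := isProbabilityMeasure_expMeasure hr
  have hmp := measurePreserving_piFinSuccAbove (fun _ : Fin (k + 1) => expMeasure r) 0
  have hset : MeasurableSet {p : ℝ × (Fin k → ℝ) | p.1 + ∑ i, p.2 i ≤ t} :=
    measurableSet_le (by fun_prop) measurable_const
  have h1 : erlangCdf r (k + 1) t =
      ((expMeasure r).prod (Measure.pi fun _ : Fin k => expMeasure r))
        {p : ℝ × (Fin k → ℝ) | p.1 + ∑ i, p.2 i ≤ t} := by
    rw [← hmp.measure_preimage hset.nullMeasurableSet]
    unfold erlangCdf
    congr 1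
    ext x
    simp [MeasurableEquiv.piFinSuccAbove, Fin.sum_univ_succ, Fin.tail]
  have h2 : ∀ s, (Prod.mk s ⁻¹' {p : ℝ × (Fin k → ℝ) | p.1 + ∑ i, p.2 i ≤ t}) =
      {x | ∑ i, x i ≤ t - s} := by
    intro s
    ext x
    simp [le_sub_iff_add_le']
  have hmeas := measurable_measure_prodMk_left (ν := Measure.pi fun _ : Fin k => expMeasure r) hset
  rw [h1, Measure.prod_apply hset]
  simp only [h2] at hmeas ⊢
  change Measurable fun s => erlangCdf r k (t - s) at hmeas
  change ∫⁻ s, erlangCdf r k (t - s) ∂(volume.withDensity (exponentialPDF r)) = _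
  rw [lintegral_withDensity_eq_lintegral_mul _ (by unfold exponentialPDF; fun_prop) hmeas]
  rfl

lemma erlangCdf_of_neg {r : ℝ} (hr : 0 < r) (k : ℕ) :
    ∀ t : ℝ, t < 0 → erlangCdf r k t = 0 := by
  induction k with
  | zero => exact fun t ht => erlangCdf_zero_of_neg r ht
  | succ k ih =>
    intro t ht
    rw [erlangCdf_succ hr]
    refine (lintegral_congr fun s => ?_).trans lintegral_zero
    rcases lt_or_ge s 0 with hs | hs
    · rw [exponentialPDF_of_neg hs, zero_mul]
    · rw [ih _ (by linarith), mul_zero]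

/-- The integral which drives both inductions bounding `erlangCdf`. -/
lemma lintegral_indicator_pow {c t : ℝ} (hc : 0 ≤ c) (ht : 0 ≤ t) (k : ℕ) :
    ∫⁻ s, (Set.Icc 0 t).indicator (fun s => ENNReal.ofReal (c * (t - s) ^ k)) s =
      ENNReal.ofReal (c * t ^ (k + 1) / (k + 1)) := by
  rw [lintegral_indicator measurableSet_Icc, ← ofReal_integral_eq_lintegral_ofReal]
  · rw [integral_Icc_eq_integral_Ioc, ← intervalIntegral.integral_of_le ht,
      intervalIntegral.integral_const_mul,
      intervalIntegral.integral_comp_sub_left (fun x => x ^ k)]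
    simp [mul_div_assoc]
  · exact (by fun_prop : Continuous fun s : ℝ => c * (t - s) ^ k).integrableOn_Icc
  · refine (ae_restrict_iff' measurableSet_Icc).mpr (Eventually.of_forall fun s hs => ?_)
    have : 0 ≤ t - s := by linarith [hs.2]
    simp only [Pi.zero_apply]
    positivity

/-- Bounding the exponential density by `r` leaves `r ^ k` times the volume `t ^ k / k!` of the
simplex. -/
lemma erlangCdf_le {r : ℝ} (hr : 0 < r) (k : ℕ) :
    ∀ t : ℝ, 0 ≤ t → erlangCdf r k t ≤ ENNReal.ofReal ((r * t) ^ k / k.factorial) := by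
  induction k with
  | zero => intro t ht; simp [erlangCdf_zero_of_nonneg r ht]
  | succ k ih =>
    intro t ht
    have hc : 0 ≤ r ^ (k + 1) / k.factorial := by positivity
    have hform : (r * t) ^ (k + 1) / (k + 1).factorial =
        r ^ (k + 1) / k.factorial * t ^ (k + 1) / (k + 1) := by
      rw [Nat.factorial_succ]; push_cast; rw [mul_pow]; field_simp
    rw [erlangCdf_succ hr, hform, ← lintegral_indicator_pow hc ht]
    refine lintegral_mono fun s => ?_
    by_cases hs : s ∈ Set.Icc 0 t
    · have hts : 0 ≤ t - s := by linarith [hs.2]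
      rw [Set.indicator_of_mem hs, exponentialPDF_of_nonneg hs.1]
      refine (mul_le_mul_right (ih _ hts) _).trans ?_
      rw [← ENNReal.ofReal_mul (by positivity)]
      refine ENNReal.ofReal_le_ofReal ?_
      have he : rexp (-(r * s)) ≤ 1 := by
        rw [Real.exp_le_one_iff]; nlinarith [mul_nonneg hr.le hs.1]
      calc r * rexp (-(r * s)) * ((r * (t - s)) ^ k / k.factorial)
          ≤ r * 1 * ((r * (t - s)) ^ k / k.factorial) := by gcongr
        _ = _ := by rw [mul_pow]; ring
    · rw [Set.indicator_of_notMem hs]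
      rcases lt_or_ge s 0 with h | h
      · rw [exponentialPDF_of_neg h, zero_mul]
      · have : t < s := by by_contra! h'; exact hs ⟨h, h'⟩
        rw [erlangCdf_of_neg hr k _ (by linarith), mul_zero]

/-- A lower bound for the Erlang distribution function. The factors `exp (-(r s))` and
`exp (-(r (t - s)))` multiply to `exp (-(r t))`, so the bound reproduces itself under the
recursion. -/
lemma le_erlangCdf {r : ℝ} (hr : 0 < r) (k : ℕ) :
    ∀ t : ℝ, 0 ≤ t →
      ENNReal.ofReal (rexp (-(r * t)) * ((r * t) ^ k / k.factorial)) ≤ erlangCdf r k t := by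
  induction k with
  | zero =>
    intro t ht
    rw [erlangCdf_zero_of_nonneg r ht]
    simpa using mul_nonneg hr.le ht
  | succ k ih =>
    intro t ht
    have hc : 0 ≤ rexp (-(r * t)) * (r ^ (k + 1) / k.factorial) := by positivity
    have hform : rexp (-(r * t)) * ((r * t) ^ (k + 1) / (k + 1).factorial) =
        rexp (-(r * t)) * (r ^ (k + 1) / k.factorial) * t ^ (k + 1) / (k + 1) := by
      rw [Nat.factorial_succ]; push_cast; rw [mul_pow]; field_simp
    rw [erlangCdf_succ hr, hform, ← lintegral_indicator_pow hc ht]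
    refine lintegral_mono fun s => ?_
    by_cases hs : s ∈ Set.Icc 0 t
    · have hts : 0 ≤ t - s := by linarith [hs.2]
      rw [Set.indicator_of_mem hs, exponentialPDF_of_nonneg hs.1]
      refine le_trans ?_ (mul_le_mul_right (ih _ hts) _)
      rw [← ENNReal.ofReal_mul (by positivity)]
      refine ENNReal.ofReal_le_ofReal (le_of_eq ?_)
      have he : rexp (-(r * t)) = rexp (-(r * s)) * rexp (-(r * (t - s))) := by
        rw [← Real.exp_add]; ring_nf
      rw [he, mul_pow]; ring
    · rw [Set.indicator_of_notMem hs]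
      exact zero_le

/-- A path with distinct vertices uses no undirected edge twice. -/
lemma edge_injective {n k : ℕ} {v : Fin (k + 1) → Fin n} (hv : Function.Injective v) :
    Function.Injective (fun m : Fin k => s(v m.castSucc, v m.succ)) := by
  intro a b h
  simp only [Sym2.eq_iff] at h
  rcases h with ⟨h, -⟩ | ⟨h1, h2⟩
  · exact Fin.castSucc_injective _ (hv h)
  · have h1 := congrArg Fin.val (hv h1)
    have h2 := congrArg Fin.val (hv h2)
    simp at h1 h2
    omega

/-- The weights of distinct edges are independent exponential variables. -/
lemma edgeSpace_sum_le {n k : ℕ} (hn : 0 < n) {e : Fin k → Sym2 (Fin n)}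
    (he : Function.Injective e) (t : ℝ) :
    edgeSpace n {w | ∑ m, w (e m) ≤ t} = erlangCdf (1 / n) k t := by
  have := isProbabilityMeasure_expMeasure (r := 1 / (n : ℝ)) (by positivity)
  have hI := iIndepFun_pi (μ := fun _ : Sym2 (Fin n) => expMeasure (1 / (n : ℝ)))
    (X := fun _ x => x) (fun _ => aemeasurable_id)
  have hmap := (hI.precomp he).map_fun_eq_pi_map (fun i => (measurable_pi_apply (e i)).aemeasurable)
  have hev : ∀ i, (Measure.pi fun _ : Sym2 (Fin n) => expMeasure (1 / (n : ℝ))).map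
      (fun w => w (e i)) = expMeasure (1 / (n : ℝ)) := fun i =>
    (measurePreserving_eval (fun _ : Sym2 (Fin n) => expMeasure (1 / (n : ℝ))) (e i)).map_eq
  simp only [hev] at hmap
  unfold erlangCdf edgeSpace
  rw [← hmap, Measure.map_apply (by fun_prop) (measurableSet_sum_le (fun i => i) t)]
  rfl

lemma card_injective_fun (n k : ℕ) [DecidablePred (Function.Injective : (Fin k → Fin n) → Prop)] :
    (Finset.univ.filter (Function.Injective : (Fin k → Fin n) → Prop)).card =
      n.descFactorial k := by
  rw [← Fintype.card_subtype,
    Fintype.card_congr (Equiv.subtypeInjectiveEquivEmbedding (Fin k) (Fin n)),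
    Fintype.card_embedding_eq]
  simp

/-- Linearity of expectation over the injective vertex sequences. -/
lemma integral_numLightSeq {n : ℕ} (hn : 0 < n) (k : ℕ) (ε : ℝ) :
    ∫ w, (numLightSeq n k ε w : ℝ) ∂(edgeSpace n) =
      n.descFactorial (k + 1) * (erlangCdf (1 / n) k ((1 - ε) * Real.log n)).toReal := by
  classical
  have := isProbabilityMeasure_expMeasure (r := 1 / (n : ℝ)) (by positivity)
  have : IsProbabilityMeasure (edgeSpace n) := by unfold edgeSpace; infer_instance
  set L := (1 - ε) * Real.log n
  let S : (Fin (k + 1) → Fin n) → Set (Sym2 (Fin n) → ℝ) := fun v =>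
    {w | ∑ m : Fin k, w s(v m.castSucc, v m.succ) ≤ L}
  have hS : ∀ v, MeasurableSet (S v) := fun v => measurableSet_sum_le _ _
  have hN : ∀ w, (numLightSeq n k ε w : ℝ) =
      ∑ v ∈ Finset.univ.filter (Function.Injective : (Fin (k + 1) → Fin n) → Prop),
        (S v).indicator 1 w := by
    intro w
    rw [numLightSeq, Nat.card_eq_fintype_card, Fintype.card_subtype, ← Finset.filter_filter,
      Finset.card_filter]
    push_cast
    refine Finset.sum_congr rfl fun v _ => ?_
    simp [Set.indicator_apply, S, L]
  simp_rw [hN]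
  have hint : ∀ v, Integrable ((S v).indicator (1 : (Sym2 (Fin n) → ℝ) → ℝ)) (edgeSpace n) := fun v =>
    (integrable_const (1 : ℝ)).indicator (hS v)
  rw [integral_finsetSum _ fun v _ => hint v]
  have : ∀ v ∈ Finset.univ.filter (Function.Injective : (Fin (k + 1) → Fin n) → Prop),
      ∫ w, (S v).indicator (1 : (Sym2 (Fin n) → ℝ) → ℝ) w ∂(edgeSpace n) = (erlangCdf (1 / n) k L).toReal := by
    intro v hv
    rw [integral_indicator_one (hS v), Measure.real,
      edgeSpace_sum_le hn (edge_injective (Finset.mem_filter.mp hv).2)]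
  rw [Finset.sum_congr rfl this, Finset.sum_const, card_injective_fun, nsmul_eq_mul]

lemma descFactorial_div_pow_le (n k : ℕ) : (n.descFactorial k : ℝ) / n ^ k ≤ 1 :=
  div_le_one_of_le₀ (by exact_mod_cast Nat.descFactorial_le_pow n k) (by positivity)

/-- Bernoulli's inequality for `(1 - k / n) ^ (k + 1)`, a lower bound for the proportion of
injective sequences. -/
lemma le_descFactorial_div_pow {n k : ℕ} (hn : 0 < n) (hkn : k ≤ n) :
    1 - ((k : ℝ) + 1) * (k / n) ≤ (n.descFactorial (k + 1) : ℝ) / n ^ (k + 1) := by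
  have hn' : (0 : ℝ) < n := by exact_mod_cast hn
  have hk' : (k : ℝ) / n ≤ 1 := div_le_one_of_le₀ (by exact_mod_cast hkn) hn'.le
  have h1 : ((n - k : ℕ) : ℝ) ^ (k + 1) ≤ n.descFactorial (k + 1) := by
    have := Nat.pow_sub_le_descFactorial n (k + 1)
    rw [Nat.add_sub_add_right] at this
    exact_mod_cast this
  have h2 := one_add_mul_le_pow (a := -((k : ℝ) / n)) (by linarith) (k + 1)
  rw [le_div_iff₀ (by positivity)]
  refine le_trans ?_ h1
  rw [Nat.cast_sub hkn]
  calc (1 - ((k : ℝ) + 1) * (k / n)) * n ^ (k + 1)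
      ≤ (1 + -((k : ℝ) / n)) ^ (k + 1) * n ^ (k + 1) := by
        gcongr
        push_cast at h2
        linarith
    _ = ((n : ℝ) - k) ^ (k + 1) := by
        rw [← mul_pow]; congr 1; field_simp; ring

/-- For fixed `ε ∈ (0,1)` and any integer sequence `k(n) → ∞` with
`2 ≤ k(n) ≤ 12 log n`, the expected number of light ordered paths satisfies
`E[N_{k(n),ε}(n)] / ((n/√(2π k(n))) ((e (1−ε) log n)/k(n))^{k(n)}) → 1`. -/
theorem stmt8 (ε : ℝ) (hε : ε ∈ Set.Ioo (0 : ℝ) 1) (k : ℕ → ℕ)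
    (hk : Tendsto k atTop atTop)
    (hkb : ∀ n : ℕ, 2 ≤ n → 2 ≤ k n ∧ (k n : ℝ) ≤ 12 * Real.log n) :
    Tendsto (fun n : ℕ =>
        (∫ w, (numLightSeq n (k n) ε w : ℝ) ∂(edgeSpace n)) /
          (((n : ℝ) / Real.sqrt (2 * Real.pi * k n)) *
            (Real.exp 1 * (1 - ε) * Real.log n / k n) ^ (k n)))
      atTop (nhds 1) := by
  obtain ⟨hε0, hε1⟩ := hε
  have hlog : Tendsto (fun n : ℕ => Real.log n / n) atTop (nhds 0) :=
    (Real.isLittleO_log_id_atTop.tendsto_div_nhds_zero).comp tendsto_natCast_atTop_atTop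
  have hlog2 : Tendsto (fun n : ℕ => Real.log n ^ 2 / n) atTop (nhds 0) :=
    (Real.isLittleO_pow_log_id_atTop (n := 2)).tendsto_div_nhds_zero.comp
      tendsto_natCast_atTop_atTop
  have hsmall : Tendsto (fun n : ℕ => ((k n : ℝ) + 1) * (k n / n)) atTop (nhds 0) := by
    have hup : Tendsto (fun n : ℕ => 144 * (Real.log n ^ 2 / n) + 12 * (Real.log n / n))
        atTop (nhds 0) := by
      simpa using (hlog2.const_mul 144).add (hlog.const_mul 12)
    refine tendsto_of_tendsto_of_tendsto_of_le_of_le' tendsto_const_nhds hup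
      (Eventually.of_forall fun n => by positivity) ?_
    filter_upwards [eventually_ge_atTop 2] with n hn
    have hb := (hkb n hn).2
    calc ((k n : ℝ) + 1) * (k n / n) ≤ (12 * Real.log n + 1) * (12 * Real.log n / n) := by
          gcongr
      _ = _ := by ring
  have hA : Tendsto (fun n : ℕ => (n.descFactorial (k n + 1) : ℝ) / n ^ (k n + 1))
      atTop (nhds 1) := by
    have hlow : Tendsto (fun n : ℕ => 1 - ((k n : ℝ) + 1) * (k n / n)) atTop (nhds 1) := by
      simpa using hsmall.const_sub 1
    refine tendsto_of_tendsto_of_tendsto_of_le_of_le' hlow tendsto_const_nhds ?_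
      (Eventually.of_forall fun n => descFactorial_div_pow_le n _)
    filter_upwards [eventually_ge_atTop 2, hsmall.eventually_lt_const one_pos] with n hn hlt
    have hn' : (0 : ℝ) < n := by positivity
    refine le_descFactorial_div_pow (by omega) ?_
    -- `k n / n ≤ (k n + 1) * (k n / n) < 1`.
    have h0 : (0 : ℝ) ≤ (k n : ℝ) * (k n / n) := by positivity
    have h1 : (k n : ℝ) / n ≤ 1 := by linarith
    rw [div_le_one hn'] at h1
    exact_mod_cast h1
  set L : ℕ → ℝ := fun n => (1 - ε) * Real.log n with hL
  have hB : Tendsto (fun n : ℕ => (erlangCdf (1 / n) (k n) (L n)).toReal /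
      ((1 / n * L n) ^ k n / (k n).factorial)) atTop (nhds 1) := by
    have hlow : Tendsto (fun n : ℕ => rexp (-(1 / n * L n))) atTop (nhds 1) := by
      have h := (hlog.const_mul (-(1 - ε))).rexp
      simp only [mul_zero, Real.exp_zero] at h
      refine h.congr fun n => ?_
      simp only [hL]
      congr 1
      ring
    refine tendsto_of_tendsto_of_tendsto_of_le_of_le' hlow tendsto_const_nhds ?_ ?_
    all_goals
      filter_upwards [eventually_ge_atTop 2] with n hn
      have hn' : (0 : ℝ) < n := by positivity
      have hlogpos : 0 < Real.log n := Real.log_pos (by exact_mod_cast hn)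
      have hLpos : 0 < L n := mul_pos (by linarith) hlogpos
      have hd : 0 < (1 / (n : ℝ) * L n) ^ k n / (k n).factorial := by positivity
      have hup := erlangCdf_le (r := 1 / (n : ℝ)) (by positivity) (k n) (L n) hLpos.le
    · rw [le_div_iff₀ hd, ← ENNReal.ofReal_le_iff_le_toReal (hup.trans_lt ENNReal.ofReal_lt_top).ne]
      exact le_erlangCdf (by positivity) (k n) (L n) hLpos.le
    · rw [div_le_one hd]
      exact ENNReal.toReal_le_of_le_ofReal hd.le hup
  have hC : Tendsto (fun n : ℕ => √(2 * π * k n) * (k n / rexp 1) ^ k n / (k n).factorial)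
      atTop (nhds 1) := by
    have h := Stirling.factorial_isEquivalent_stirling
    have h' := (Asymptotics.isEquivalent_iff_tendsto_one (by
      filter_upwards [eventually_gt_atTop 0] with m hm
      positivity)).mp h.symm
    refine (h'.comp hk).congr fun n => ?_
    simp [mul_comm, mul_left_comm]
  -- The three limits multiply to the claim: `n ^ (k + 1)`, `k!` and the Stirling term cancel.
  have hABC := (hA.mul hB).mul hC
  simp only [mul_one] at hABC
  refine hABC.congr' ?_
  filter_upwards [eventually_ge_atTop 2] with n hn
  have hn' : (0 : ℝ) < n := by positivity
  have hlogpos : 0 < Real.log n := Real.log_pos (by exact_mod_cast hn)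
  have hLpos : 0 < L n := mul_pos (by linarith) hlogpos
  have hkpos : (0 : ℝ) < k n := by exact_mod_cast (by linarith [(hkb n hn).1] : 0 < k n)
  rw [integral_numLightSeq (by omega), mul_assoc (rexp 1)]
  change _ = (_ * (erlangCdf (1 / n) (k n) (L n)).toReal) / (_ * (rexp 1 * L n / k n) ^ k n)
  generalize (erlangCdf (1 / n) (k n) (L n)).toReal = p
  have hs : 0 < √(2 * π * k n) := by positivity
  generalize √(2 * π * k n) = s at hs
  have hf : (0 : ℝ) < (k n).factorial := by positivity
  generalize L n = l at hLpos
  rw [div_pow, div_pow, mul_pow, mul_pow, one_div, inv_pow]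
  field_simp
  ring
end

section
/- Fix c > 2. For all sufficiently large n (depending on c), for every ε with c log log n / log n < ε < 1, and for every fixed path P = (v_1,…,v_{k+1}) in K_n with 1 ≤ k ≤ 12 log n: conditionally on the event { w(P) ≤ (1−ε) log n }, the probability that P is not the minimum-weight path from v_1 to v_{k+1} (i.e., that there exists a path Q ≠ P from v_1 to v_{k+1} with w(Q) ≤ w(P)) is at most 13 k² / n^{ε}. -/
/-!
Let `W = (1 - ε) log n`. If `Q ≠ P` is a path with the same endpoints as `P`, then `Q` uses an edge
outside `P` (`path_eq_of_edges_subset`), and so it contains an *excursion*: a nonempty subwalk between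
two vertices of `P` none of whose edges lies in `P` (`exists_excursion`). Weights being almost surely
nonnegative, `w(Q) ≤ w(P) ≤ W` forces the excursion to have weight at most `W`.

The weight of a given excursion with `m` edges is independent of `w(P)`, because the edge sets are
disjoint. It is a sum of `m` independent exponential variables with mean `n`, so it is at most `W` with
probability at most `(W / n) ^ m / m!` (`measure_sum_le`), since each exponential density is at most
`1 / n`. There are at most `n ^ (m - 1)` walks with `m` edges between two given vertices
(`card_finsetWalkLength_le`), so the expected number of light excursions between them is at most
`∑ m, W ^ m / (m! n) ≤ exp W / n = n ^ (-ε)` (`sum_measure_excursion_le`). A union bound over the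
`(k + 1) ^ 2 ≤ 4 k ^ 2` ordered pairs of vertices of `P` concludes.
-/

open MeasureTheory ProbabilityTheory Real Filter

/-! ### Excursions of one path from another, and counting walks -/

/-- A walk starting outside `S` and ending in `S`, cut at its first visit to `S`, uses only edges with
an endpoint outside `S`, hence no edge of `E`. -/
lemma exists_walk_to_set {n : ℕ} {S : Set (Fin n)} {E : Set (Sym2 (Fin n))}
    (hE : ∀ e ∈ E, ∀ x ∈ e, x ∈ S) {a b : Fin n} (q : (Kn n).Walk a b) (ha : a ∉ S) (hb : b ∈ S) :
    ∃ b' ∈ S, ∃ r : (Kn n).Walk a b', r.edges.Sublist q.edges ∧ ∀ e ∈ r.edges, e ∉ E := by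
  induction q with
  | nil => exact absurd hb ha
  | @cons a c b h q ih =>
    have he : s(a, c) ∉ E := fun h' => ha (hE _ h' a (Sym2.mem_mk_left a c))
    by_cases hc : c ∈ S
    · refine ⟨c, hc, .cons h .nil, ?_, ?_⟩
      · simp
      · simpa using he
    · obtain ⟨b', hb', r, hr, hrE⟩ := ih hc hb
      refine ⟨b', hb', .cons h r, ?_, ?_⟩
      · simpa using hr
      · simpa using ⟨he, hrE⟩

/-- Applied with `S` and `E` the vertices and edges of a path `p`: a walk between vertices of `p` which
uses an edge outside `p` contains a nonempty subwalk between vertices of `p` avoiding the edges of `p`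
altogether. -/
lemma exists_excursion {n : ℕ} {S : Set (Fin n)} {E : Set (Sym2 (Fin n))}
    (hE : ∀ e ∈ E, ∀ x ∈ e, x ∈ S) {a b : Fin n} (q : (Kn n).Walk a b) (ha : a ∈ S) (hb : b ∈ S)
    (hq : ∃ e ∈ q.edges, e ∉ E) :
    ∃ a' ∈ S, ∃ b' ∈ S, ∃ r : (Kn n).Walk a' b',
      1 ≤ r.length ∧ r.edges.Sublist q.edges ∧ ∀ e ∈ r.edges, e ∉ E := by
  induction q with
  | nil => simp at hq
  | @cons a c b h q ih =>
    by_cases he : s(a, c) ∈ E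
    · have hc : c ∈ S := hE _ he c (Sym2.mem_mk_right a c)
      have hq' : ∃ e ∈ q.edges, e ∉ E := by
        obtain ⟨e, heq, heE⟩ := hq
        rw [SimpleGraph.Walk.edges_cons, List.mem_cons] at heq
        rcases heq with rfl | heq
        · exact absurd he heE
        · exact ⟨e, heq, heE⟩
      obtain ⟨a', ha', b', hb', r, h1, hr, hrE⟩ := ih hc hb hq'
      exact ⟨a', ha', b', hb', r, h1, by simpa using hr.cons _, hrE⟩
    · by_cases hc : c ∈ S
      · exact ⟨a, ha, c, hc, .cons h .nil, by simp, by simp, by simpa using he⟩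
      · obtain ⟨b', hb', r, hr, hrE⟩ := exists_walk_to_set hE q hc hb
        exact ⟨a, ha, b', hb', .cons h r, by simp, by simpa using hr, by simpa using ⟨he, hrE⟩⟩

/-- A path is determined by its endpoints within its own edge set. -/
lemma path_eq_of_edges_subset {V : Type*} {G : SimpleGraph V} {u v : V} (p q : G.Walk u v)
    (hp : p.IsPath) (hq : q.IsPath) (h : q.edges ⊆ p.edges) : q = p := by
  induction p with
  | nil => simpa using hq
  | @cons u c v huc p ih =>
    rw [SimpleGraph.Walk.cons_isPath_iff] at hp
    cases q with
    | nil => exact absurd p.end_mem_support hp.2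
    | @cons _ c' _ huc' q =>
      rw [SimpleGraph.Walk.cons_isPath_iff] at hq
      have key : ∀ x, s(u, x) ∈ (SimpleGraph.Walk.cons huc p).edges → x = c := by
        intro x hx
        rw [SimpleGraph.Walk.edges_cons, List.mem_cons] at hx
        rcases hx with hx | hx
        · rcases Sym2.eq_iff.1 hx with ⟨-, h⟩ | ⟨h, -⟩
          · exact h
          · exact absurd h huc.ne
        · exact absurd (p.fst_mem_support_of_mem_edges hx) hp.2
      obtain rfl : c' = c := key c' (h (by simp))
      congr 1
      refine ih q hp.1 hq.1 fun e he => ?_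
      have := h (by simp [he] : e ∈ (SimpleGraph.Walk.cons huc' q).edges)
      rw [SimpleGraph.Walk.edges_cons, List.mem_cons] at this
      rcases this with rfl | h'
      · exact absurd (q.fst_mem_support_of_mem_edges he) hq.2
      · exact h'

open Classical in
lemma card_finsetWalkLength_le {n : ℕ} (m : ℕ) (a b : Fin n) :
    ((Kn n).finsetWalkLength (m + 1) a b).card ≤ n ^ m := by
  induction m generalizing a with
  | zero =>
    rw [pow_zero, Finset.card_le_one]
    intro p hp q hq
    rw [SimpleGraph.mem_finsetWalkLength_iff] at hp hq
    match p, q, hp, hq with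
    | .cons _ .nil, .cons _ .nil, _, _ => rfl
  | succ m ih =>
    refine Finset.card_biUnion_le.trans ?_
    simp only [Finset.card_map]
    refine (Finset.sum_le_card_nsmul _ _ (n ^ m) fun x _ => ih x.1).trans ?_
    rw [smul_eq_mul, pow_succ']
    gcongr
    exact (Finset.card_le_univ _).trans
      ((Fintype.card_subtype_le _).trans (Fintype.card_fin n).le)

/-! ### The lower tail of a sum of independent exponential variables -/

lemma measure_add_le {Ω : Type*} [MeasurableSpace Ω] (μ : Measure Ω) [IsProbabilityMeasure μ]
    {X Y : Ω → ℝ} (hX : Measurable X) (hY : Measurable Y) (h : IndepFun X Y μ) (x : ℝ) :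
    μ {ω | X ω + Y ω ≤ x} = ∫⁻ t, μ {ω | Y ω ≤ x - t} ∂(μ.map X) := by
  have hm := (indepFun_iff_map_prod_eq_prod_map_map hX.aemeasurable hY.aemeasurable).1 h
  have hs : MeasurableSet {z : ℝ × ℝ | z.1 + z.2 ≤ x} :=
    measurableSet_le (by fun_prop) (by fun_prop)
  have := Measure.isProbabilityMeasure_map (μ := μ) hY.aemeasurable
  calc μ {ω | X ω + Y ω ≤ x} = (μ.map fun ω => (X ω, Y ω)) {z : ℝ × ℝ | z.1 + z.2 ≤ x} := by
        rw [Measure.map_apply (hX.prodMk hY) hs]; rfl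
    _ = ∫⁻ t, (μ.map Y) {y | t + y ≤ x} ∂(μ.map X) := by
        rw [hm, Measure.prod_apply hs]; rfl
    _ = _ := by
        refine lintegral_congr fun t => ?_
        rw [Measure.map_apply hY (measurableSet_le (by fun_prop) (by fun_prop))]
        congr 1; ext ω
        simp [le_sub_iff_add_le']

/-- The exponential density with rate `r` is at most `r` on `[0, ∞)` and vanishes elsewhere. -/
lemma expMeasure_le {r : ℝ} (hr : 0 < r) :
    expMeasure r ≤ ENNReal.ofReal r • volume.restrict (Set.Ici (0 : ℝ)) := by
  have h : expMeasure r = volume.withDensity (exponentialPDF r) := rfl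
  rw [h, ← withDensity_indicator_one (measurableSet_Ici), ← withDensity_smul _ (by
    exact measurable_one.indicator measurableSet_Ici)]
  refine withDensity_mono (Eventually.of_forall fun x => ?_)
  by_cases hx : 0 ≤ x
  · rw [exponentialPDF_of_nonneg hx]
    simp only [Pi.smul_apply, Set.indicator, Set.mem_Ici, hx, if_true, Pi.one_apply, smul_eq_mul, mul_one]
    refine ENNReal.ofReal_le_ofReal (mul_le_of_le_one_right hr.le ?_)
    exact Real.exp_le_one_iff.2 (by have := mul_nonneg hr.le hx; linarith)
  · rw [exponentialPDF_of_neg (not_le.1 hx)]; exact zero_le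

lemma integral_gammaTail (r x : ℝ) (m : ℕ) :
    ∫ t in (0:ℝ)..x, (r * (x - t)) ^ m / (m.factorial : ℝ)
      = r ^ m * x ^ (m + 1) / ((m + 1).factorial : ℝ) := by
  have h1 : ∀ t : ℝ, (r * (x - t)) ^ m / (m.factorial : ℝ)
      = (r ^ m / (m.factorial : ℝ)) * (x - t) ^ m := fun t => by rw [mul_pow]; ring
  simp_rw [h1]
  rw [intervalIntegral.integral_const_mul, intervalIntegral.integral_comp_sub_left (fun y => y ^ m) x,
    integral_pow, Nat.factorial_succ]
  have : (m.factorial : ℝ) ≠ 0 := by positivity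
  push_cast
  field_simp
  simp

lemma lintegral_gammaTail {r : ℝ} (hr : 0 < r) {x : ℝ} (hx : 0 ≤ x) (m : ℕ) :
    ∫⁻ t in Set.Icc 0 x, ENNReal.ofReal ((r * (x - t)) ^ m / (m.factorial : ℝ))
      = ENNReal.ofReal (r ^ m * x ^ (m + 1) / ((m + 1).factorial : ℝ)) := by
  rw [← integral_gammaTail, ← ofReal_integral_eq_lintegral_ofReal]
  · rw [intervalIntegral.integral_of_le hx, integral_Icc_eq_integral_Ioc]
  · exact (by fun_prop : Continuous fun t : ℝ => (r * (x - t)) ^ m / (m.factorial : ℝ)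
      ).continuousOn.integrableOn_compact isCompact_Icc
  · refine (ae_restrict_mem measurableSet_Icc).mono fun t ht => ?_
    have : 0 ≤ r * (x - t) := mul_nonneg hr.le (sub_nonneg.2 ht.2)
    positivity

/-- A sum of `m` independent exponential variables of rate `r` is at most `x` with probability at most
`(r x) ^ m / m!`. The case split records that it is almost surely nonnegative, which the induction on
`m` needs in order to restrict the convolution integral to `[0, x]`. -/
lemma measure_sum_le {ι Ω : Type*} [MeasurableSpace Ω] (μ : Measure Ω)
    [IsProbabilityMeasure μ] {X : ι → Ω → ℝ} (hX : ∀ i, Measurable (X i)) (hind : iIndepFun X μ)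
    {r : ℝ} (hr : 0 < r) (hlaw : ∀ i, μ.map (X i) = expMeasure r) (F : Finset ι) (x : ℝ) :
    μ {ω | ∑ i ∈ F, X i ω ≤ x} ≤
      if 0 ≤ x then ENNReal.ofReal ((r * x) ^ F.card / (F.card.factorial : ℝ)) else 0 := by
  classical
  induction F using Finset.induction_on generalizing x with
  | empty =>
    by_cases hx : 0 ≤ x
    · simp [hx]
    · simp [hx]
  | insert i F hi ih =>
    have hmeas : Measurable (∑ j ∈ F, X j) := by fun_prop
    have hI : IndepFun (X i) (∑ j ∈ F, X j) μ := (hind.indepFun_finsetSum_of_notMem hX hi).symm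
    have h0 := measure_add_le μ (hX i) hmeas hI x
    simp only [Finset.sum_apply] at h0
    simp only [Finset.sum_insert hi, Finset.card_insert_of_notMem hi]
    rw [h0, hlaw]
    set m := F.card
    have hle : ∫⁻ t, μ {ω | ∑ j ∈ F, X j ω ≤ x - t} ∂(expMeasure r) ≤
        ENNReal.ofReal r * ∫⁻ t in Set.Ici 0, (Set.Iic x).indicator (fun t =>
          ENNReal.ofReal ((r * (x - t)) ^ m / (m.factorial : ℝ))) t := by
      rw [← smul_eq_mul, ← lintegral_smul_measure]
      refine lintegral_mono' (expMeasure_le hr) fun t => (ih (x - t)).trans ?_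
      by_cases ht : t ≤ x <;> simp [ht, Set.indicator]
    refine hle.trans ?_
    rw [setLIntegral_indicator measurableSet_Iic, Set.inter_comm, Set.Ici_inter_Iic]
    by_cases hx : 0 ≤ x
    · rw [lintegral_gammaTail hr hx, ← ENNReal.ofReal_mul hr.le, if_pos hx]
      refine ENNReal.ofReal_le_ofReal (le_of_eq ?_)
      rw [mul_pow]; ring
    · simp [Set.Icc_eq_empty hx]

/-! ### The edge-weight space and the first-moment bound -/

section EdgeSpace

variable {n : ℕ}

lemma isProbabilityMeasure_exp_rate (hn : 0 < n) :
    IsProbabilityMeasure (expMeasure (1 / (n : ℝ))) :=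
  isProbabilityMeasure_expMeasure (by positivity)

lemma isProbabilityMeasure_edgeSpace (hn : 0 < n) : IsProbabilityMeasure (edgeSpace n) := by
  have := isProbabilityMeasure_exp_rate hn
  unfold edgeSpace
  infer_instance

lemma iIndepFun_edgeSpace (hn : 0 < n) :
    iIndepFun (fun (e : Sym2 (Fin n)) (w : Sym2 (Fin n) → ℝ) => w e) (edgeSpace n) := by
  have := isProbabilityMeasure_exp_rate hn
  exact iIndepFun_pi (X := fun (_ : Sym2 (Fin n)) (x : ℝ) => x) fun _ => aemeasurable_id

lemma map_edgeSpace (hn : 0 < n) (e : Sym2 (Fin n)) :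
    (edgeSpace n).map (fun w => w e) = expMeasure (1 / (n : ℝ)) := by
  have := isProbabilityMeasure_exp_rate hn
  exact (measurePreserving_eval (fun _ : Sym2 (Fin n) => expMeasure (1 / (n : ℝ))) e).map_eq

lemma ae_nonneg_edgeSpace (hn : 0 < n) : ∀ᵐ w ∂(edgeSpace n), ∀ e, 0 ≤ w e := by
  rw [ae_all_iff]
  intro e
  have h : ∀ᵐ x ∂(expMeasure (1 / (n : ℝ))), 0 ≤ x :=
    (Measure.absolutelyContinuous_of_le (expMeasure_le (by positivity))).ae_le
      (Measure.ae_smul_measure (ae_restrict_mem measurableSet_Ici) _)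
  rw [← map_edgeSpace hn e] at h
  exact ae_of_ae_map (measurable_pi_apply e).aemeasurable h

lemma walkWeight_eq_sum (w : Sym2 (Fin n) → ℝ) {a b : Fin n} (r : (Kn n).Walk a b)
    (hr : r.edges.Nodup) : walkWeight w r = ∑ e ∈ r.edges.toFinset, w e :=
  (List.sum_toFinset w hr).symm

lemma measurable_walkWeight {a b : Fin n} (r : (Kn n).Walk a b) :
    Measurable fun w => walkWeight w r := by
  unfold walkWeight
  induction r.edges with
  | nil => simp
  | cons e l ih =>
    simp only [List.map_cons, List.sum_cons]
    exact (measurable_pi_apply e).add ih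

/-- An excursion `r` with no edge in `p` has weight independent of that of `p`, so the two events
`w(p) ≤ W` and `w(r) ≤ W` multiply, the second being bounded by the gamma tail. -/
lemma measure_inter_le (hn : 0 < n) {W : ℝ} (hW : 0 ≤ W) {u v a b : Fin n}
    (p : (Kn n).Walk u v) (hp : p.edges.Nodup) (r : (Kn n).Walk a b) (hr : r.edges.Nodup)
    (hd : ∀ e ∈ r.edges, e ∉ p.edges) :
    edgeSpace n ({w | walkWeight w p ≤ W} ∩ {w | walkWeight w r ≤ W}) ≤
      edgeSpace n {w | walkWeight w p ≤ W} *
        ENNReal.ofReal ((1 / (n : ℝ) * W) ^ r.length / (r.length.factorial : ℝ)) := by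
  have := isProbabilityMeasure_edgeSpace hn
  have hI := iIndepFun_edgeSpace hn
  have hdis : Disjoint p.edges.toFinset r.edges.toFinset := by
    rw [Finset.disjoint_left]
    intro e he he'
    exact hd e (List.mem_toFinset.1 he') (List.mem_toFinset.1 he)
  have h2 := hI.indepFun_finset p.edges.toFinset r.edges.toFinset hdis
    (fun e => measurable_pi_apply e)
  have h3 : IndepFun (fun w => walkWeight w p) (fun w => walkWeight w r) (edgeSpace n) := by
    have h4 := h2.comp (φ := fun z : p.edges.toFinset → ℝ => ∑ i, z i)
      (ψ := fun z : r.edges.toFinset → ℝ => ∑ i, z i) (by fun_prop) (by fun_prop)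
    convert h4 using 1
    · ext w
      rw [walkWeight_eq_sum w p hp]
      exact (Finset.sum_coe_sort p.edges.toFinset w).symm
    · ext w
      rw [walkWeight_eq_sum w r hr]
      exact (Finset.sum_coe_sort r.edges.toFinset w).symm
  have h5 := h3.measure_inter_preimage_eq_mul (Set.Iic W) (Set.Iic W) measurableSet_Iic
    measurableSet_Iic
  refine h5.le.trans ?_
  gcongr
  · exact le_rfl
  have h6 := measure_sum_le (edgeSpace n) (fun e => measurable_pi_apply e) hI
    (r := 1 / (n : ℝ)) (by positivity) (map_edgeSpace hn) r.edges.toFinset W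
  rw [if_pos hW, List.toFinset_card_of_nodup hr, SimpleGraph.Walk.length_edges] at h6
  refine le_trans (le_of_eq ?_) h6
  congr 1
  ext w
  simp [walkWeight_eq_sum w r hr]

open Classical in
/-- First-moment bound over all excursions from `a` to `b` with at most `M` edges: at most `n ^ m` of
them have `m + 1` edges, and summing `n ^ m * (W / n) ^ (m + 1) / (m + 1)!` over `m` gives at most
`exp W / n`. -/
lemma sum_measure_excursion_le (hn : 0 < n) {W : ℝ} (hW : 0 ≤ W) {u v : Fin n}
    (p : (Kn n).Walk u v) (hp : p.edges.Nodup) (a b : Fin n) (M : ℕ) :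
    ∑ m ∈ Finset.range M, ∑ r ∈ ((Kn n).finsetWalkLength (m + 1) a b).filter
        (fun r => r.edges.Nodup ∧ ∀ e ∈ r.edges, e ∉ p.edges),
      edgeSpace n ({w | walkWeight w p ≤ W} ∩ {w | walkWeight w r ≤ W}) ≤
      edgeSpace n {w | walkWeight w p ≤ W} * ENNReal.ofReal (Real.exp W / n) := by
  have hn' : (0 : ℝ) < n := by exact_mod_cast hn
  have h1 : ∀ m ∈ Finset.range M, ∑ r ∈ ((Kn n).finsetWalkLength (m + 1) a b).filter
        (fun r => r.edges.Nodup ∧ ∀ e ∈ r.edges, e ∉ p.edges),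
      edgeSpace n ({w | walkWeight w p ≤ W} ∩ {w | walkWeight w r ≤ W}) ≤
      edgeSpace n {w | walkWeight w p ≤ W} *
        ENNReal.ofReal (W ^ (m + 1) / ((m + 1).factorial : ℝ) / n) := by
    intro m _
    refine (Finset.sum_le_card_nsmul _ _ (edgeSpace n {w | walkWeight w p ≤ W} *
      ENNReal.ofReal ((1 / (n : ℝ) * W) ^ (m + 1) / ((m + 1).factorial : ℝ))) ?_).trans ?_
    · intro r hr
      rw [Finset.mem_filter, SimpleGraph.mem_finsetWalkLength_iff] at hr
      have := measure_inter_le hn hW p hp r hr.2.1 hr.2.2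
      rwa [hr.1] at this
    · rw [nsmul_eq_mul, mul_left_comm]
      gcongr
      calc _ ≤ ((n ^ m : ℕ) : ENNReal) * ENNReal.ofReal
              ((1 / (n : ℝ) * W) ^ (m + 1) / ((m + 1).factorial : ℝ)) := by
            gcongr
            exact (Finset.card_filter_le _ _).trans (card_finsetWalkLength_le m a b)
        _ = _ := by
            rw [← ENNReal.ofReal_natCast, ← ENNReal.ofReal_mul (by positivity)]
            congr 1
            push_cast
            field_simp
            rw [← pow_succ, ← mul_pow, mul_div_cancel₀ _ hn'.ne']
  refine (Finset.sum_le_sum h1).trans ?_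
  rw [← Finset.mul_sum]
  gcongr
  rw [← ENNReal.ofReal_sum_of_nonneg (fun m _ => by positivity), ← Finset.sum_div]
  refine ENNReal.ofReal_le_ofReal ?_
  gcongr
  refine le_trans ?_ (Real.sum_le_exp_of_nonneg hW (M + 1))
  rw [Finset.sum_range_succ']
  simp

end EdgeSpace

/-- Fix `c > 2`. For all sufficiently large `n`, every `ε` with
`c log log n / log n < ε < 1`, and every path `P = (v_1,…,v_{k+1})` in `K_n` with
`1 ≤ k ≤ 12 log n`: conditionally on `w(P) ≤ (1−ε) log n`, the probability that `P` is
not the minimum-weight path between its endpoints is at most `13 k² / n^ε`. -/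
theorem stmt10 (c : ℝ) (hc : 2 < c) :
    ∃ N : ℕ, ∀ n : ℕ, N ≤ n →
      ∀ ε : ℝ, c * Real.log (Real.log n) / Real.log n < ε → ε < 1 →
      ∀ (u v : Fin n) (p : (Kn n).Walk u v), p.IsPath →
        1 ≤ p.length → (p.length : ℝ) ≤ 12 * Real.log n →
        (edgeSpace n)[|{w | walkWeight w p ≤ (1 - ε) * Real.log n}]
            {w | ∃ q : (Kn n).Walk u v, q.IsPath ∧ q ≠ p ∧
              walkWeight w q ≤ walkWeight w p} ≤
          ENNReal.ofReal (13 * (p.length : ℝ) ^ 2 / (n : ℝ) ^ ε) := by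
  classical
  -- the bound holds for every `n ≥ 1`
  refine ⟨1, fun n hn ε _ hε u v p hp hk _ => ?_⟩
  have hn' : (0 : ℝ) < n := by exact_mod_cast hn
  have := isProbabilityMeasure_edgeSpace hn
  set W : ℝ := (1 - ε) * Real.log n with hWdef
  have hW : 0 ≤ W := mul_nonneg (by linarith) (Real.log_natCast_nonneg n)
  set B : Set (Sym2 (Fin n) → ℝ) := {w | walkWeight w p ≤ W} with hB
  have hBm : MeasurableSet B := measurableSet_le (measurable_walkWeight p) measurable_const
  set D : Set (Sym2 (Fin n) → ℝ) := {w | ∃ q : (Kn n).Walk u v, q.IsPath ∧ q ≠ p ∧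
              walkWeight w q ≤ walkWeight w p} with hD
  set M := Fintype.card (Sym2 (Fin n)) with hM
  set S := p.support.toFinset with hS
  -- the event that `w(P) ≤ W` and some excursion from `a` to `b` with `m + 1` edges weighs at most `W`
  set R : Fin n → Fin n → (m : ℕ) → Set (Sym2 (Fin n) → ℝ) := fun a b m =>
    ⋃ r ∈ ((Kn n).finsetWalkLength (m + 1) a b).filter
        (fun r => r.edges.Nodup ∧ ∀ e ∈ r.edges, e ∉ p.edges), (B ∩ {w | walkWeight w r ≤ W})
    with hR
  have hsub : (B ∩ D : Set (Sym2 (Fin n) → ℝ)) ≤ᵐ[edgeSpace n]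
      (⋃ a ∈ S, ⋃ b ∈ S, ⋃ m ∈ Finset.range M, R a b m : Set (Sym2 (Fin n) → ℝ)) := by
    filter_upwards [ae_nonneg_edgeSpace hn] with w hw hwBD
    obtain ⟨hwB, q, hq, hqp, hqw⟩ := hwBD
    have hne : ∃ e ∈ q.edges, e ∉ {e | e ∈ p.edges} := by
      by_contra! hcon
      exact hqp (path_eq_of_edges_subset p q hp hq fun e he => hcon e he)
    obtain ⟨a, ha, b, hb, r, hr1, hrs, hrE⟩ := exists_excursion (S := {x | x ∈ p.support})
      (E := {e | e ∈ p.edges}) (fun e he x hx => p.mem_support_of_mem_edges he hx) q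
      p.start_mem_support p.end_mem_support hne
    have hnd : r.edges.Nodup := hrs.nodup hq.isTrail.edges_nodup
    have hlen : r.length ≤ M := by
      rw [← SimpleGraph.Walk.length_edges]; exact hnd.length_le_card
    have hwr : walkWeight w r ≤ walkWeight w q := by
      refine (hrs.map w).sum_le_sum fun x hx => ?_
      obtain ⟨e, _, rfl⟩ := List.mem_map.1 hx
      exact hw e
    change w ∈ (⋃ a ∈ S, ⋃ b ∈ S, ⋃ m ∈ Finset.range M, R a b m : Set (Sym2 (Fin n) → ℝ))
    simp only [Set.mem_iUnion, hR]
    refine ⟨a, List.mem_toFinset.2 ha, b, List.mem_toFinset.2 hb, r.length - 1, ?_, r, ?_, hwB, ?_⟩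
    · rw [Finset.mem_range]; omega
    · rw [Finset.mem_filter, SimpleGraph.mem_finsetWalkLength_iff]
      exact ⟨by omega, hnd, hrE⟩
    · exact hwr.trans (hqw.trans hwB)
  have hRle : ∀ a b, ∑ m ∈ Finset.range M, edgeSpace n (R a b m) ≤
      edgeSpace n B * ENNReal.ofReal (Real.exp W / n) := fun a b =>
    (Finset.sum_le_sum fun m _ => measure_biUnion_finset_le _ _).trans
      (sum_measure_excursion_le hn hW p hp.isTrail.edges_nodup a b M)
  have hcard : S.card ≤ p.length + 1 := by
    rw [← SimpleGraph.Walk.length_support]; exact List.toFinset_card_le _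
  -- at most `(k + 1)² ≤ 4 k²` ordered pairs `(a, b)` contribute, and `exp W / n = n ^ (-ε)`
  have hmain : edgeSpace n (B ∩ D) ≤
      edgeSpace n B * ENNReal.ofReal (13 * (p.length : ℝ) ^ 2 / (n : ℝ) ^ ε) := by
    calc edgeSpace n (B ∩ D)
        ≤ ∑ a ∈ S, ∑ b ∈ S, ∑ m ∈ Finset.range M, edgeSpace n (R a b m) := by
          refine (measure_mono_ae hsub).trans ((measure_biUnion_finset_le _ _).trans ?_)
          gcongr
          refine (measure_biUnion_finset_le _ _).trans ?_
          gcongr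
          exact measure_biUnion_finset_le _ _
      _ ≤ ∑ a ∈ S, ∑ b ∈ S, edgeSpace n B * ENNReal.ofReal (Real.exp W / n) := by
          gcongr with a _ b _
          exact hRle a b
      _ = edgeSpace n B * ENNReal.ofReal ((S.card : ℝ) * S.card * (Real.exp W / n)) := by
          rw [ENNReal.ofReal_mul (by positivity), ENNReal.ofReal_mul (by positivity)]
          simp only [Finset.sum_const, nsmul_eq_mul, ENNReal.ofReal_natCast]
          ring
      _ ≤ _ := by
          gcongr
          have hexp : Real.exp W / n = 1 / (n : ℝ) ^ ε := by
            rw [Real.rpow_def_of_pos hn', hWdef]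
            nth_rewrite 2 [← Real.exp_log hn']
            rw [← Real.exp_sub, one_div, ← Real.exp_neg]
            congr 1; ring
          rw [hexp, mul_one_div]
          have h1 : (S.card : ℝ) ≤ p.length + 1 := by exact_mod_cast hcard
          have h2 : (1 : ℝ) ≤ p.length := by exact_mod_cast hk
          have h3 : (0 : ℝ) ≤ S.card := by positivity
          have h4 : (S.card : ℝ) * S.card ≤ 13 * (p.length : ℝ) ^ 2 := by nlinarith
          gcongr
  rw [cond_apply hBm]
  calc (edgeSpace n B)⁻¹ * edgeSpace n (B ∩ D)
      ≤ (edgeSpace n B)⁻¹ * (edgeSpace n B *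
          ENNReal.ofReal (13 * (p.length : ℝ) ^ 2 / (n : ℝ) ^ ε)) := by gcongr
    _ ≤ _ := by
      rw [← mul_assoc]
      -- an inequality and not `= 1`, so that the case `edgeSpace n B = 0` is included
      exact mul_le_of_le_one_left' (ENNReal.inv_mul_le_one _)
end

section
/- Let n ≥ 1, k ≥ 1 and let i, j be integers with 1 ≤ j ≤ i ≤ k. Let N_{k,i,j} be the number of ordered pairs (P, Q) of self-avoiding paths in the complete graph on n vertices, each with exactly k edges, such that the intersection graph P ∩ Q (the graph formed by the edges common to P and Q) has exactly i edges forming exactly j connected components. Then N_{k,i,j} ≤ n^{2k+2−i−j} · (2k³)^{j}. -/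
/-- `E` is the edge set of a self-avoiding path with `k` edges in `K_n`. Identifying a
self-avoiding path with its set of edges identifies the path with its reversal. -/
def IsPathEdgeSet (n k : ℕ) (E : Finset (Sym2 (Fin n))) : Prop :=
  ∃ (u v : Fin n) (p : (Kn n).Walk u v), p.IsPath ∧ p.length = k ∧ p.edges.toFinset = E

/-- The number of connected components containing at least one edge of the graph on
`Fin n` formed by the edges in `E`. -/
noncomputable def numEdgeComponents {n : ℕ} (E : Finset (Sym2 (Fin n))) : ℕ :=
  Nat.card {c : (SimpleGraph.fromEdgeSet (E : Set (Sym2 (Fin n)))).ConnectedComponent //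
    ∃ x y : Fin n, (SimpleGraph.fromEdgeSet (E : Set (Sym2 (Fin n)))).Adj x y ∧
      (SimpleGraph.fromEdgeSet (E : Set (Sym2 (Fin n)))).connectedComponentMk x = c}

/-! ### Sequences of positions with unit steps -/

/-- A sequence of naturals with steps `±1` that never immediately backtracks is increasing or
decreasing with constant slope. -/
theorem unit_steps (L : ℕ) (h : ℕ → ℕ)
    (hs : ∀ t < L, h (t+1) = h t + 1 ∨ h t = h (t+1) + 1)
    (hi : ∀ t, t + 2 ≤ L → h (t+2) ≠ h t) :
    (∀ t ≤ L, h t = h 0 + t) ∨ (∀ t ≤ L, h t + t = h 0) := by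
  induction L with
  | zero => left; intro t ht; obtain rfl : t = 0 := by omega
            rfl
  | succ L ih =>
    have := ih (fun t ht => hs t (by omega)) (fun t ht => hi t (by omega))
    rcases Nat.eq_zero_or_pos L with rfl | hL
    · rcases hs 0 (by omega) with h0 | h0
      · left; intro t ht; interval_cases t <;> simp_all
      · right; intro t ht; interval_cases t <;> simp_all
    · have h1 := hs L (by omega)
      have h2 := hi (L-1) (by omega)
      have e : L - 1 + 2 = L + 1 := by omega
      rw [e] at h2
      rcases this with h3 | h3
      · left; intro t ht
        rcases Nat.lt_or_ge t (L+1) with h4 | h4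
        · exact h3 t (by omega)
        · obtain rfl : t = L+1 := by omega
          have := h3 L le_rfl; have := h3 (L-1) (by omega)
          omega
      · right; intro t ht
        rcases Nat.lt_or_ge t (L+1) with h4 | h4
        · exact h3 t (by omega)
        · obtain rfl : t = L+1 := by omega
          have := h3 L le_rfl; have := h3 (L-1) (by omega)
          omega

/-! ### Paths as vertex sequences -/

/-- The edge set of the path visiting `p 0, …, p k`. The sequence is indexed by `ℕ` for convenience
of index arithmetic; its values beyond `k` play no role. -/
def pathEdges {V : Type*} [DecidableEq V] (k : ℕ) (p : ℕ → V) : Finset (Sym2 V) :=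
  (Finset.range k).image fun m => s(p m, p (m + 1))

theorem edge_idx {V : Type*} [DecidableEq V] {k : ℕ} {p : ℕ → V} (hp : Set.InjOn p (Set.Iic k))
    {x y : ℕ} (hx : x ≤ k) (hy : y ≤ k) (h : s(p x, p y) ∈ pathEdges k p) :
    y = x + 1 ∨ x = y + 1 := by
  simp only [pathEdges, Finset.mem_image, Finset.mem_range, Sym2.eq_iff] at h
  obtain ⟨m, hm, ⟨h1, h2⟩ | ⟨h1, h2⟩⟩ := h
  · have := hp (Set.mem_Iic.2 (by omega)) (Set.mem_Iic.2 hx) h1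
    have := hp (Set.mem_Iic.2 (by omega)) (Set.mem_Iic.2 hy) h2
    omega
  · have := hp (Set.mem_Iic.2 (by omega)) (Set.mem_Iic.2 hy) h1
    have := hp (Set.mem_Iic.2 (by omega)) (Set.mem_Iic.2 hx) h2
    omega

/-- If `G` is a subgraph of the path `p` and connects `p x` to `p y`, then it contains every edge of
the path between the two: removing the edge `p m, p (m + 1)` makes `{p 0, …, p m}` closed under
adjacency in `G`. -/
theorem cut {V : Type*} [DecidableEq V] {k : ℕ} {p : ℕ → V} (hp : Set.InjOn p (Set.Iic k))
    {G : SimpleGraph V} (hG : ∀ x y, G.Adj x y → s(x, y) ∈ pathEdges k p)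
    {x y m : ℕ} (hxm : x ≤ m) (hmy : m < y) (hy : y ≤ k) (hr : G.Reachable (p x) (p y)) :
    G.Adj (p m) (p (m + 1)) := by
  by_contra hna
  have key : ∀ v, G.Reachable (p x) v → ∃ z ≤ m, p z = v := by
    intro v hv
    rw [SimpleGraph.reachable_iff_reflTransGen] at hv
    induction hv with
    | refl => exact ⟨x, hxm, rfl⟩
    | tail _ hab ih =>
      obtain ⟨z, hz, rfl⟩ := ih
      rename_i c _
      have h1 := hG _ _ hab
      have h0 := h1
      simp only [pathEdges, Finset.mem_image, Finset.mem_range, Sym2.eq_iff] at h1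
      obtain ⟨w, hw, hwc⟩ : ∃ w ≤ k, p w = c := by
        obtain ⟨r, hr, ⟨_, h2⟩ | ⟨h2, _⟩⟩ := h1
        · exact ⟨r + 1, by omega, h2⟩
        · exact ⟨r, by omega, h2⟩
      subst hwc
      refine ⟨w, ?_, rfl⟩
      rcases edge_idx hp (by omega) hw h0 with h | h
      · subst h
        rcases Nat.lt_or_ge z m with h | h
        · omega
        · obtain rfl : z = m := by omega
          exact absurd hab hna
      · omega
  obtain ⟨z, hz, hzy⟩ := key _ hr
  have := hp (Set.mem_Iic.2 (by omega)) (Set.mem_Iic.2 hy) hzy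
  omega

theorem IsPathEdgeSet.exists_seq {n k : ℕ} {E : Finset (Sym2 (Fin n))} (h : IsPathEdgeSet n k E) :
    ∃ p : ℕ → Fin n, Set.InjOn p (Set.Iic k) ∧ E = pathEdges k p := by
  obtain ⟨u, v, w, hw, rfl, rfl⟩ := h
  refine ⟨w.getVert, hw.getVert_injOn, ?_⟩
  ext e
  simp only [List.mem_toFinset, pathEdges, Finset.mem_image, Finset.mem_range]
  rw [SimpleGraph.Walk.edges, List.mem_iff_getElem]
  simp only [List.length_map, SimpleGraph.Walk.length_darts, List.getElem_map]
  constructor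
  · rintro ⟨m, hm, rfl⟩
    refine ⟨m, hm, ?_⟩
    rw [SimpleGraph.Walk.darts_getElem_eq_getVert]
    rfl
  · rintro ⟨m, hm, rfl⟩
    refine ⟨m, hm, ?_⟩
    rw [SimpleGraph.Walk.darts_getElem_eq_getVert]
    rfl

/-! ### The runs of common edges -/

/-- The common edges of `p` and `q` split into `j` runs: the `l`-th consists of the `L l` edges of
`p` at positions `a l, …, a l + L l - 1`, and distinct runs share no vertex. -/
theorem exists_runs {n k i j : ℕ} {p q : ℕ → Fin n} (hp : Set.InjOn p (Set.Iic k))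
    (hj : 1 ≤ j) (hi : (pathEdges k p ∩ pathEdges k q).card = i)
    (hc : numEdgeComponents (pathEdges k p ∩ pathEdges k q) = j) :
    ∃ a L : Fin j → ℕ, (∀ l, 1 ≤ L l ∧ a l + L l ≤ k) ∧ ∑ l, L l = i ∧
      (∀ l l' t t', t ≤ L l → t' ≤ L l' → a l + t = a l' + t' → l = l') ∧
      ∀ l, ∀ t < L l, s(p (a l + t), p (a l + t + 1)) ∈ pathEdges k q := by
  classical
  set H := pathEdges k p ∩ pathEdges k q with hH
  set G := SimpleGraph.fromEdgeSet (H : Set (Sym2 (Fin n))) with hGdef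
  have hG : ∀ x y, G.Adj x y → s(x, y) ∈ H := by
    intro x y h
    rw [hGdef, SimpleGraph.fromEdgeSet_adj] at h
    exact h.1
  have hGp : ∀ x y, G.Adj x y → s(x, y) ∈ pathEdges k p := fun x y h =>
    (Finset.mem_inter.1 (hG x y h)).1
  -- the positions of the common edges along `p`
  set A := (Finset.range k).filter fun m => G.Adj (p m) (p (m + 1)) with hA
  have hAH : A.image (fun m => s(p m, p (m + 1))) = H := by
    ext e
    simp only [hA, Finset.mem_image, Finset.mem_filter, Finset.mem_range]
    constructor
    · rintro ⟨m, ⟨_, hm⟩, rfl⟩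
      exact hG _ _ hm
    · intro he
      have he' := (Finset.mem_inter.1 he).1
      simp only [pathEdges, Finset.mem_image, Finset.mem_range] at he'
      obtain ⟨m, hm, rfl⟩ := he'
      refine ⟨m, ⟨hm, ?_⟩, rfl⟩
      rw [hGdef, SimpleGraph.fromEdgeSet_adj]
      refine ⟨he, fun h => ?_⟩
      have := hp (Set.mem_Iic.2 (by omega)) (Set.mem_Iic.2 (by omega)) h
      omega
  have hAcard : A.card = i := by
    rw [← hi, ← hAH, Finset.card_image_of_injOn]
    intro m hm m' hm' h
    simp only [hA, Finset.coe_filter, Set.mem_ofPred_eq, Finset.mem_range] at hm hm'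
    simp only [Sym2.eq_iff] at h
    rcases h with ⟨h, _⟩ | ⟨h, h'⟩
    · exact hp (Set.mem_Iic.2 (by omega)) (Set.mem_Iic.2 (by omega)) h
    · have := hp (Set.mem_Iic.2 (by omega)) (Set.mem_Iic.2 (by omega)) h
      have := hp (Set.mem_Iic.2 (by omega)) (Set.mem_Iic.2 (by omega)) h'
      omega
  let C := {c : G.ConnectedComponent // ∃ x y, G.Adj x y ∧ G.connectedComponentMk x = c}
  have hC : Nat.card C = j := hc
  have : Finite C := Nat.finite_of_card_ne_zero (by omega)
  let e : Fin j ≃ C := (Finite.equivFinOfCardEq hC).symm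
  -- the edge positions of each component form a nonempty interval
  have hrun : ∀ c : C, ∃ a L, 1 ≤ L ∧ a + L ≤ k ∧
      A.filter (fun m => G.connectedComponentMk (p m) = c.1) = Finset.Ico a (a + L) := by
    rintro ⟨c, x, y, hxy, hxc⟩
    set B := A.filter (fun m => G.connectedComponentMk (p m) = c) with hB
    have hne : B.Nonempty := by
      have h1 := hG _ _ hxy
      rw [← hAH, Finset.mem_image] at h1
      obtain ⟨m, hm, h1⟩ := h1
      refine ⟨m, Finset.mem_filter.2 ⟨hm, ?_⟩⟩
      rw [Sym2.eq_iff] at h1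
      rcases h1 with ⟨h1, _⟩ | ⟨h1, _⟩
      · rw [h1, hxc]
      · rw [h1, ← hxc]
        exact (SimpleGraph.ConnectedComponent.sound hxy.reachable).symm
    have hmem : ∀ m, m ∈ B ↔ (m < k ∧ G.Adj (p m) (p (m + 1))) ∧
        G.connectedComponentMk (p m) = c := by
      intro m; simp [hB, hA]
    have hmin := (hmem _).1 (B.min'_mem hne)
    have hmax := (hmem _).1 (B.max'_mem hne)
    have hle : B.min' hne ≤ B.max' hne := B.min'_le _ (B.max'_mem hne)
    refine ⟨B.min' hne, B.max' hne + 1 - B.min' hne, by omega, by omega, ?_⟩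
    ext z
    rw [Finset.mem_Ico]
    constructor
    · intro hz
      have := B.min'_le _ hz
      have := B.le_max' _ hz
      omega
    · rintro ⟨h1, h2⟩
      generalize B.min' hne = a at *
      generalize B.max' hne = b at *
      have hz : ∀ z, a ≤ z → z ≤ b → G.Adj (p z) (p (z + 1)) := by
        intro z h1 h2
        rcases Nat.lt_or_ge z b with h3 | h3
        · refine cut hp hGp h1 h3 (by omega) ?_
          rw [← SimpleGraph.ConnectedComponent.eq, hmin.2, hmax.2]
        · obtain rfl : z = b := by omega
          exact hmax.1.2
      refine (hmem z).2 ⟨⟨by omega, hz z h1 (by omega)⟩, ?_⟩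
      have : ∀ d, a + d ≤ b → G.connectedComponentMk (p (a + d)) = c := by
        intro d
        induction d with
        | zero => intro _; exact hmin.2
        | succ d ih =>
          intro hd
          rw [← ih (by omega)]
          exact (SimpleGraph.ConnectedComponent.sound
            (hz (a + d) (by omega) (by omega)).reachable).symm
      have h4 := this (z - a) (by omega)
      rwa [show a + (z - a) = z by omega] at h4
  choose a L hL hk hB using hrun
  have hmem : ∀ c m, a c ≤ m → m < a c + L c →
      G.Adj (p m) (p (m + 1)) ∧ G.connectedComponentMk (p m) = c.1 := by
    intro c m h1 h2
    have : m ∈ A.filter (fun m => G.connectedComponentMk (p m) = c.1) := by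
      rw [hB, Finset.mem_Ico]; exact ⟨h1, h2⟩
    simp only [hA, Finset.mem_filter] at this
    exact ⟨this.1.2, this.2⟩
  have hcomp : ∀ c t, t ≤ L c → G.connectedComponentMk (p (a c + t)) = c.1 := by
    intro c t ht
    rcases Nat.lt_or_ge t (L c) with h | h
    · exact (hmem c (a c + t) (by omega) (by omega)).2
    · obtain rfl : t = L c := by omega
      have hl := hL c
      have h3 := hmem c (a c + (L c - 1)) (by omega) (by omega)
      rw [show a c + (L c - 1) + 1 = a c + L c by omega] at h3
      rw [← h3.2]
      exact (SimpleGraph.ConnectedComponent.sound h3.1.reachable).symm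
  refine ⟨fun l => a (e l), fun l => L (e l), fun l => ⟨hL _, hk _⟩, ?_, ?_, ?_⟩
  · have : Fintype C := Fintype.ofFinite C
    rw [Equiv.sum_comp e L, ← hAcard]
    have hU : A = Finset.univ.biUnion fun c => Finset.Ico (a c) (a c + L c) := by
      ext m
      simp only [Finset.mem_biUnion, Finset.mem_univ, true_and, ← hB, Finset.mem_filter]
      constructor
      · intro hm
        exact ⟨⟨_, p m, p (m + 1), (Finset.mem_filter.1 hm).2, rfl⟩, hm, rfl⟩
      · rintro ⟨_, hm, _⟩
        exact hm
    rw [hU, Finset.card_biUnion]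
    · simp
    · intro c _ c' _ hcc
      rw [Function.onFun, Finset.disjoint_left]
      intro m hm hm'
      rw [Finset.mem_Ico] at hm hm'
      apply hcc
      apply Subtype.ext
      rw [← (hmem c m hm.1 hm.2).2, (hmem c' m hm'.1 hm'.2).2]
  · intro l l' t t' ht ht' h
    apply e.injective
    apply Subtype.ext
    rw [← hcomp _ t ht, ← hcomp _ t' ht', h]
  · intro l t ht
    beta_reduce at ht
    exact (Finset.mem_inter.1 (hG _ _ (hmem (e l) (a (e l) + t) (by omega) (by omega)).1)).2

/-- A run of `L` edges of `p` that are also edges of `q` is traversed by `q` in one direction: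
`h t` is the position in `q` of the `t`-th vertex of the run, and it has constant slope `1` or
`-1`. -/
theorem exists_placement {V : Type*} [DecidableEq V] {k : ℕ} {p q : ℕ → V}
    (hp : Set.InjOn p (Set.Iic k)) (hq : Set.InjOn q (Set.Iic k)) {a L : ℕ}
    (hL : 1 ≤ L) (hk : a + L ≤ k)
    (hE : ∀ t < L, s(p (a + t), p (a + t + 1)) ∈ pathEdges k q) :
    ∃ h : ℕ → ℕ, (∀ t ≤ L, h t ≤ k ∧ q (h t) = p (a + t)) ∧
      ((∀ t ≤ L, h t = h 0 + t) ∨ (∀ t ≤ L, h t + t = h 0)) := by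
  have hex : ∀ t, ∃ u, t ≤ L → u ≤ k ∧ q u = p (a + t) := by
    intro t
    by_cases ht : t ≤ L
    swap
    · exact ⟨0, fun h => absurd h ht⟩
    rcases Nat.lt_or_ge t L with h | h
    · have h1 := hE t h
      simp only [pathEdges, Finset.mem_image, Finset.mem_range, Sym2.eq_iff] at h1
      obtain ⟨m, hm, ⟨h1, h2⟩ | ⟨h1, h2⟩⟩ := h1
      · exact ⟨m, fun _ => ⟨by omega, h1⟩⟩
      · exact ⟨m + 1, fun _ => ⟨by omega, h2⟩⟩
    · have h1 := hE (t - 1) (by omega)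
      rw [show a + (t - 1) + 1 = a + t by omega] at h1
      simp only [pathEdges, Finset.mem_image, Finset.mem_range, Sym2.eq_iff] at h1
      obtain ⟨m, hm, ⟨h1, h2⟩ | ⟨h1, h2⟩⟩ := h1
      · exact ⟨m + 1, fun _ => ⟨by omega, h2⟩⟩
      · exact ⟨m, fun _ => ⟨by omega, h1⟩⟩
  choose h hh using hex
  refine ⟨h, hh, unit_steps L h ?_ ?_⟩
  · intro t ht
    have h1 := hE t ht
    have e1 := hh t (by omega)
    have e2 := hh (t + 1) (by omega)
    rw [← e1.2, show a + t + 1 = a + (t + 1) by omega, ← e2.2] at h1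
    exact edge_idx hq e1.1 e2.1 h1
  · intro t ht heq
    have e1 := hh t (by omega)
    have e2 := hh (t + 2) ht
    rw [heq, e1.2] at e2
    have := hp (Set.mem_Iic.2 (by omega)) (Set.mem_Iic.2 (by omega)) e2.2
    omega

/-! ### Counting codes -/

/-- A code `(a, d, x, o)` for a run with `d + 1` edges that starts at position `a` in `p`. If the
orientation `o` is `true`, then `q` traverses the run forwards from position `x`; otherwise the run
starts at position `x + 1` in `q` and is traversed backwards. A run has at least one edge, so the
shifts by `1` make every entry range over exactly `k` values. -/
abbrev RunCode (k : ℕ) : Type := Fin k × Fin k × Fin k × Bool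

/-- The position `u` in `q` and the position `m` in `p` carry, according to the code `r`, the same
vertex of the run, namely its `t`-th one counted along `p`. -/
def RunCode.Matches {k : ℕ} (r : RunCode k) (u m : ℕ) : Prop :=
  ∃ t ≤ r.2.1.val + 1, m = r.1.val + t ∧
    ((r.2.2.2 = true ∧ u = r.2.2.1.val + t) ∨ (r.2.2.2 = false ∧ u + t = r.2.2.1.val + 1))

/-- The positions of `q` whose vertices are determined by `p` and the codes `c`. The position `m`
in `p` is required to exist, since not every code describes a run inside `p`. -/
def forced {k j : ℕ} (c : Fin j → RunCode k) : Set (Fin (k + 1)) :=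
  {u | ∃ l, ∃ m : Fin (k + 1), (c l).Matches u m}

/-- The sequence `Q` runs through the pieces of `P` described by the codes `c` as they
prescribe. -/
def Compat {n k j : ℕ} (P : Fin (k + 1) → Fin n) (c : Fin j → RunCode k)
    (Q : Fin (k + 1) → Fin n) : Prop :=
  ∀ l, ∀ u m : Fin (k + 1), (c l).Matches u m → Q u = P m

/-- Every pair of paths with `i` common edges in `j` components admits codes that force at least
`i + j` positions of the second path. -/
theorem exists_code {n k i j : ℕ} {p q : ℕ → Fin n} (hp : Set.InjOn p (Set.Iic k))
    (hq : Set.InjOn q (Set.Iic k))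
    (hj : 1 ≤ j) (hi : (pathEdges k p ∩ pathEdges k q).card = i)
    (hc : numEdgeComponents (pathEdges k p ∩ pathEdges k q) = j) :
    ∃ c : Fin j → RunCode k, i + j ≤ (forced c).ncard ∧
      Compat (fun m : Fin (k + 1) => p m) c (fun m : Fin (k + 1) => q m) := by
  classical
  obtain ⟨a, L, hL, hsum, hdisj, hE⟩ := exists_runs hp hj hi hc
  choose h hh hmono using fun l => exists_placement hp hq (hL l).1 (hL l).2 (hE l)
  -- `r` encodes the `l`-th run: its `t`-th vertex is matched with position `h l t` of `q` only
  have hcode : ∀ l, ∃ r : RunCode k, r.1.val = a l ∧ r.2.1.val + 1 = L l ∧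
      ∀ t ≤ L l, ∀ u : ℕ, ((r.2.2.2 = true ∧ u = r.2.2.1.val + t) ∨
        (r.2.2.2 = false ∧ u + t = r.2.2.1.val + 1)) ↔ u = h l t := by
    intro l
    have h1 := hL l
    have h2 := hh l (L l) le_rfl
    have h3 := hh l 0 (by omega)
    rcases hmono l with hm | hm
    · have h4 := hm (L l) le_rfl
      refine ⟨(⟨a l, by omega⟩, ⟨L l - 1, by omega⟩, ⟨h l 0, by omega⟩, true), rfl,
        by simp only; omega, ?_⟩
      intro t ht u
      have := hm t ht
      simp only [true_and, Bool.true_eq_false, false_and, or_false]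
      omega
    · have h4 := hm (L l) le_rfl
      refine ⟨(⟨a l, by omega⟩, ⟨L l - 1, by omega⟩, ⟨h l 0 - 1, by omega⟩, false), rfl,
        by simp only; omega, ?_⟩
      intro t ht u
      have := hm t ht
      simp only [true_and, Bool.false_eq_true, false_and, false_or]
      omega
  choose c hca hcL hch using hcode
  have hmat : ∀ l u m, (c l).Matches u m ↔ ∃ t ≤ L l, m = a l + t ∧ u = h l t := by
    intro l u m
    unfold RunCode.Matches
    rw [hca, hcL]
    exact exists_congr fun t => and_congr_right fun ht => and_congr_right fun _ => hch l t ht u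
  refine ⟨c, ?_, ?_⟩
  · -- the vertices of the runs occupy pairwise distinct positions of `q`
    let D := (Finset.univ : Finset (Fin j)).sigma fun l => Finset.range (L l + 1)
    have hD : D.card = i + j := by
      simp [D, Finset.card_sigma, Finset.sum_add_distrib, hsum]
    let f : (Σ _ : Fin j, ℕ) → Fin (k + 1) := fun s => Fin.ofNat (k + 1) (h s.1 s.2)
    have hf : ∀ s ∈ D, (f s).val = h s.1 s.2 := by
      rintro ⟨l, t⟩ hs
      simp only [D, Finset.mem_sigma, Finset.mem_univ, true_and, Finset.mem_range] at hs
      have := (hh l t (by omega)).1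
      simp only [f, Fin.val_ofNat]
      exact Nat.mod_eq_of_lt (by omega)
    rw [← hD, ← Finset.card_image_of_injOn (s := D) (f := f), ← Set.ncard_coe_finset]
    · apply Set.ncard_le_ncard _ (Set.toFinite _)
      intro u hu
      rw [Finset.mem_coe, Finset.mem_image] at hu
      obtain ⟨⟨l, t⟩, hs, rfl⟩ := hu
      have h1 := hf _ hs
      simp only [D, Finset.mem_sigma, Finset.mem_univ, true_and, Finset.mem_range] at hs
      have := hL l
      exact ⟨l, ⟨a l + t, by omega⟩, (hmat _ _ _).2 ⟨t, by omega, rfl, h1⟩⟩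
    · rintro ⟨l, t⟩ hs ⟨l', t'⟩ hs' heq
      have h1 := hf _ hs
      have h2 := hf _ hs'
      rw [heq] at h1
      have h3 : h l t = h l' t' := h1.symm.trans h2
      simp only [D, Finset.mem_coe, Finset.mem_sigma, Finset.mem_univ, true_and,
        Finset.mem_range] at hs hs'
      have hl := hL l
      have hl' := hL l'
      have h4 : a l + t = a l' + t' := by
        apply hp (Set.mem_Iic.2 (by omega)) (Set.mem_Iic.2 (by omega))
        rw [← (hh l t (by omega)).2, ← (hh l' t' (by omega)).2, h3]
      obtain rfl := hdisj l l' t t' (by omega) (by omega) h4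
      obtain rfl : t = t' := by omega
      rfl
  · intro l u m hm
    obtain ⟨t, ht, hm, hu⟩ := (hmat _ _ _).1 hm
    simp only [hm, hu]
    exact (hh l t ht).2

/-- A compatible sequence is determined by its values outside the forced positions. -/
theorem card_compat_le {n k j : ℕ} (hn : 1 ≤ n) (P : Fin (k + 1) → Fin n)
    (c : Fin j → RunCode k) {s : ℕ} (hs : s ≤ (forced c).ncard) :
    Nat.card {Q : Fin (k + 1) → Fin n // Compat P c Q} ≤ n ^ (k + 1 - s) := by
  classical
  let R : {Q : Fin (k + 1) → Fin n // Compat P c Q} → (((forced c)ᶜ : Set _) → Fin n) :=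
    fun Q u => Q.1 u
  have hR : Function.Injective R := by
    rintro ⟨Q, hQ⟩ ⟨Q', hQ'⟩ h
    apply Subtype.ext
    funext u
    by_cases hu : u ∈ forced c
    · obtain ⟨l, m, hm⟩ := hu
      exact (hQ l u m hm).trans (hQ' l u m hm).symm
    · exact congrFun h ⟨u, hu⟩
  refine (Nat.card_le_card_of_injective R hR).trans ?_
  rw [Nat.card_fun, Nat.card_fin, Nat.card_coe_set_eq]
  apply Nat.pow_le_pow_right hn
  have := Set.ncard_add_ncard_compl (forced c)
  rw [Nat.card_fin] at this
  omega

/-- The number `N_{k,i,j}` of ordered pairs `(P, Q)` of self-avoiding paths in the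
complete graph on `n` vertices, each with exactly `k` edges, whose common edges number
exactly `i` and form exactly `j` connected components, satisfies
`N_{k,i,j} ≤ n^{2k+2−i−j} (2k³)^j`. -/
theorem stmt13 (n k i j : ℕ) (hn : 1 ≤ n) (hk : 1 ≤ k) (hj : 1 ≤ j) (hji : j ≤ i)
    (hik : i ≤ k) :
    Nat.card {PQ : Finset (Sym2 (Fin n)) × Finset (Sym2 (Fin n)) //
        IsPathEdgeSet n k PQ.1 ∧ IsPathEdgeSet n k PQ.2 ∧
        (PQ.1 ∩ PQ.2).card = i ∧ numEdgeComponents (PQ.1 ∩ PQ.2) = j} ≤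
      n ^ (2 * k + 2 - i - j) * (2 * k ^ 3) ^ j := by
  classical
  let Z := {c : Fin j → RunCode k // i + j ≤ (forced c).ncard}
  let X := Σ s : (Fin (k + 1) → Fin n) × Z,
    {Q : Fin (k + 1) → Fin n // Compat s.1 s.2.1 Q}
  have hlift : ∀ PQ : {PQ : Finset (Sym2 (Fin n)) × Finset (Sym2 (Fin n)) //
        IsPathEdgeSet n k PQ.1 ∧ IsPathEdgeSet n k PQ.2 ∧
        (PQ.1 ∩ PQ.2).card = i ∧ numEdgeComponents (PQ.1 ∩ PQ.2) = j},
      ∃ x : X, PQ.1 = (pathEdges k fun m => x.1.1 (Fin.ofNat (k + 1) m),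
        pathEdges k fun m => x.2.1 (Fin.ofNat (k + 1) m)) := by
    rintro ⟨⟨E, F⟩, hE, hF, hi, hc⟩
    obtain ⟨p, hp, rfl⟩ := hE.exists_seq
    obtain ⟨q, hq, rfl⟩ := hF.exists_seq
    obtain ⟨c, hcard, hcomp⟩ := exists_code hp hq hj hi hc
    refine ⟨⟨(_, ⟨c, hcard⟩), ⟨_, hcomp⟩⟩, ?_⟩
    have : ∀ r : ℕ → Fin n,
        pathEdges k r = pathEdges k fun m => r (Fin.ofNat (k + 1) m).val := by
      intro r
      apply Finset.image_congr
      intro m hm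
      rw [Finset.mem_coe, Finset.mem_range] at hm
      simp only [Fin.val_ofNat]
      rw [Nat.mod_eq_of_lt (by omega), Nat.mod_eq_of_lt (by omega)]
    exact Prod.ext (this p) (this q)
  choose f hf using hlift
  have hfinj : Function.Injective f := by
    intro x y h
    apply Subtype.ext
    rw [hf x, hf y, h]
  refine (Nat.card_le_card_of_injective f hfinj).trans ?_
  have hZ : Nat.card Z ≤ (2 * k ^ 3) ^ j := by
    refine (Nat.card_le_card_of_injective _ Subtype.val_injective).trans ?_
    simp only [Nat.card_eq_fintype_card, Fintype.card_fun, Fintype.card_prod, Fintype.card_fin,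
      Fintype.card_bool]
    apply le_of_eq
    congr 1
    ring
  rcases isEmpty_or_nonempty Z with hemp | ⟨⟨c₀, hc₀⟩⟩
  · have : IsEmpty X := ⟨fun x => hemp.false x.1.2⟩
    simp
  have hij : i + j ≤ k + 1 := by
    have h := Set.ncard_le_card (forced c₀)
    rw [Nat.card_fin] at h
    omega
  rw [show Nat.card X = _ from Nat.card_sigma]
  calc _ ≤ ∑ _s : (Fin (k + 1) → Fin n) × Z, n ^ (k + 1 - (i + j)) :=
        Finset.sum_le_sum fun s _ => card_compat_le hn s.1 s.2.1 s.2.2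
    _ = n ^ (2 * k + 2 - i - j) * Nat.card Z := by
        rw [show 2 * k + 2 - i - j = (k + 1) + (k + 1 - (i + j)) by omega, pow_add]
        simp [Fintype.card_prod]
        ring
    _ ≤ _ := Nat.mul_le_mul_left _ hZ
end

section
/- Let α* be the unique solution in (1,∞) of α log α − α = 1, and define g*(β) = β log( (2α* − β)/(4e) ) + 2α* log( 2α*/(2α* − β) ) for β ∈ [0, α*]. Then g* attains its maximum on [0, α*] at β = 2α* − 4, and g*(β) ≤ 1.04 for all β ∈ [0, α*]. -/
/-!
Put `t = 2α* - β > 0`. The logarithms in `g*` expand to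
`g*(β) = 2α* log (2α*) - 2α* (log 4 + 1) + t (log 4 - log t) + t`,
and `log x ≤ x - 1` at `x = 4 / t` gives `t (log 4 - log t) + t ≤ 4`, with equality at `t = 4`,
that is at `β = 2α* - 4`. Substituting `α* log α* = α* + 1`, the maximum is `6 - 2 α* log 2`.
It remains to locate `α*`: the bound `α* ≤ 4` puts the maximizer in `[0, α*]`, and
`3.578 ≤ α*` gives `6 - 2 α* log 2 ≤ 1.04`.
-/

/-- The maximizer `2a - 4` is at most `a` because of this bound. -/
lemma root_le_four {a : ℝ} (heq : a * Real.log a - a = 1) : a ≤ 4 := by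
  by_contra! h
  have h1 : Real.log 4 ≤ Real.log a := Real.log_le_log (by norm_num) h.le
  have h4 : Real.log 4 = 2 * Real.log 2 := by
    rw [show (4 : ℝ) = 2 ^ 2 by norm_num, Real.log_pow]; norm_num
  have h2 := Real.log_two_gt_d9
  nlinarith

/-- The tangent bound `log x ≤ x - 1` is applied at `x = √a / 2`; at `x = a / 4` it would
be too weak to reach the constant `3.578`. -/
lemma le_root {a : ℝ} (ha : 1 < a) (heq : a * Real.log a - a = 1) : 3.578 ≤ a := by
  by_contra! h
  obtain ⟨s, hs, rfl⟩ : ∃ s : ℝ, 0 < s ∧ a = 4 * s ^ 2 :=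
    ⟨√a / 2, by positivity, by rw [div_pow, Real.sq_sqrt (by linarith)]; ring⟩
  have hl : Real.log (4 * s ^ 2) = 2 * Real.log 2 + 2 * Real.log s := by
    rw [show 4 * s ^ 2 = 2 ^ 2 * s ^ 2 by norm_num,
      Real.log_mul (by norm_num) (by positivity), Real.log_pow, Real.log_pow]
    norm_num
  have h1 := Real.log_le_sub_one_of_pos hs
  have h2 := Real.log_two_lt_d9
  have h3 : s < 0.9458 := by nlinarith
  have h5 : Real.log (4 * s ^ 2) - 1 ≤ 0.2779 := by rw [hl]; norm_num at *; linarith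
  norm_num at *
  nlinarith

/-- The expanded form of `g*` in terms of `t = 2a - b`. -/
lemma g_expand {a b : ℝ} (ha : 0 < a) (hb : 0 < 2 * a - b) :
    b * Real.log ((2 * a - b) / (4 * Real.exp 1)) +
        2 * a * Real.log (2 * a / (2 * a - b)) =
      2 * a * Real.log (2 * a) - 2 * a * (Real.log 4 + 1)
        + (2 * a - b) * (Real.log 4 - Real.log (2 * a - b)) + (2 * a - b) := by
  rw [Real.log_div hb.ne' (by positivity), Real.log_mul (by norm_num) (by positivity),
    Real.log_exp, Real.log_div (by positivity) hb.ne']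
  ring


/-- Let `α*` be the unique solution in `(1,∞)` of `α log α − α = 1` and define
`g*(β) = β log((2α* − β)/(4e)) + 2α* log(2α*/(2α* − β))` on `[0, α*]`. Then `g*`
attains its maximum on `[0, α*]` at `β = 2α* − 4`, and `g*(β) ≤ 1.04` on `[0, α*]`. -/
theorem stmt19 (αs : ℝ) (hαs : αs ∈ Set.Ioi (1 : ℝ))
    (heq : αs * Real.log αs - αs = 1)
    (g : ℝ → ℝ)
    (hg : ∀ β : ℝ, g β =
      β * Real.log ((2 * αs - β) / (4 * Real.exp 1)) +
        2 * αs * Real.log (2 * αs / (2 * αs - β))) :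
    (2 * αs - 4 ∈ Set.Icc (0 : ℝ) αs) ∧
    (∀ β ∈ Set.Icc (0 : ℝ) αs, g β ≤ g (2 * αs - 4)) ∧
    (∀ β ∈ Set.Icc (0 : ℝ) αs, g β ≤ 1.04) := by
  have ha : 1 < αs := hαs
  have hlo := le_root ha heq
  have hhi := root_le_four heq
  have hlo' : (2 : ℝ) ≤ αs := by norm_num at hlo; linarith
  have hlog4 : Real.log 4 = 2 * Real.log 2 := by
    rw [show (4 : ℝ) = 2 ^ 2 by norm_num, Real.log_pow]; norm_num
  have hmax : g (2 * αs - 4) = 6 - 2 * αs * Real.log 2 := by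
    rw [hg, g_expand (by linarith) (by linarith),
      show 2 * αs - (2 * αs - 4) = 4 by ring,
      Real.log_mul (by norm_num) (by linarith), hlog4]
    linear_combination 2 * heq
  have hle : ∀ β ∈ Set.Icc (0 : ℝ) αs, g β ≤ g (2 * αs - 4) := by
    rintro β ⟨-, hβ⟩
    have ht : 0 < 2 * αs - β := by linarith
    have h1 := Real.log_le_sub_one_of_pos (show 0 < 4 / (2 * αs - β) by positivity)
    rw [Real.log_div (by norm_num) ht.ne'] at h1
    have h2 := mul_le_mul_of_nonneg_left h1 ht.le
    rw [show (2 * αs - β) * (4 / (2 * αs - β) - 1) = 4 - (2 * αs - β) by field_simp] at h2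
    rw [hg β, hg (2 * αs - 4), g_expand (by linarith) ht, g_expand (by linarith) (by linarith),
      show 2 * αs - (2 * αs - 4) = 4 by ring]
    linarith
  refine ⟨⟨by linarith, by linarith⟩, hle, fun β hβ => (hle β hβ).trans ?_⟩
  rw [hmax]
  have h2 := Real.log_two_gt_d9
  norm_num at *
  nlinarith
end
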